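/- Mixing: suppose ε < 0 or ε > 2/π. Then the dynamical system (I × I, T̃_ε, μ) is mixing: for all measurable sets A, B ⊆ I × I, μ(T̃_ε^{−n}(A) ∩ B) converges to μ(A)·μ(B) as n → ∞. -/

import Mathlib

open MeasureTheory Real Filter

/-- `rmod x` is the unique representative of `x` modulo 1 lying in `[-1/2, 1/2)`. -/
noncomputable def rmod (x : ℝ) : ℝ := x - ⌊x + 1/2⌋

/-- The map `T̃_ε (p, q) = (q, ⟪2q - p - 2ε tan(π q)⟫)`. -/
noncomputable def Ttilde (ε : ℝ) : ℝ × ℝ → ℝ × ℝ := fun x =>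
  (rmod x.2, rmod (2 * x.2 - x.1 - 2 * ε * Real.tan (Real.pi * x.2)))

/-- The unit square `I × I` with `I = [-1/2, 1/2)`. -/
def unitSq : Set (ℝ × ℝ) := Set.Ico (-(1:ℝ)/2) (1/2) ×ˢ Set.Ico (-(1:ℝ)/2) (1/2)

/-- The uniform (Lebesgue) probability measure on `I × I`. -/
noncomputable def unifSq : Measure (ℝ × ℝ) := volume.restrict unitSq

theorem hilbert_mix {H : Type*} [NormedAddCommGroup H] [InnerProductSpace ℝ H] [CompleteSpace H]
    (U : H →ₗᵢ[ℝ] H) (e : H) (he : ‖e‖ = 1) (hUe : U e = e)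
    (W : ℕ → Submodule ℝ H) (hW : Monotone W)
    (hUW : ∀ m, ∀ f ∈ W m, U f ∈ W (m+1))
    (c : ℝ) (hc : 0 < c)
    (hang : ∀ m l, ∀ f ∈ W m, ∀ h ∈ W l,
      2 * inner ℝ f ((U^[m]) h) ≤ (1 - c) * (‖f‖^2 + ‖h‖^2) + 2 * c * (inner ℝ f e * inner ℝ h e))
    (happ : ∀ f : H, ∀ δ > 0, ∃ m l, ∃ w ∈ W l, ‖(U^[m]) f - w‖ < δ)
    (f g : H) : Tendsto (fun n : ℕ => inner ℝ ((U^[n]) f) g) atTop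
      (nhds (inner ℝ f e * inner ℝ g e)) := by
  have hUn : ∀ n, ∃ V : H →ₗᵢ[ℝ] H, ∀ x, V x = (U^[n]) x := by
    intro n
    induction n with
    | zero => exact ⟨LinearIsometry.id, fun x => rfl⟩
    | succ n ih =>
      obtain ⟨V, hV⟩ := ih
      refine ⟨V.comp U, fun x => ?_⟩
      simp [hV, Function.iterate_succ_apply]
  choose V hV using hUn
  simp only [← hV] at hang happ ⊢
  have hVe : ∀ n, V n e = e := by
    intro n; rw [hV]; exact Function.iterate_fixed hUe n
  have hVadd : ∀ n m x, V (n+m) x = V n (V m x) := by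
    intro n m x; simp only [hV, Function.iterate_add_apply]
  set G : Submodule ℝ H := (⨆ m, W m).topologicalClosure with hG
  have hdir : Directed (· ≤ ·) W := hW.directed_le
  have hGmem : ∀ x, x ∈ G ↔ ∀ δ > 0, ∃ l, ∃ w ∈ W l, ‖x - w‖ < δ := by
    intro x
    rw [hG, ← SetLike.mem_coe, Submodule.topologicalClosure_coe, Metric.mem_closure_iff]
    refine forall₂_congr fun δ hδ => ?_
    constructor
    · rintro ⟨b, hb, hd⟩
      obtain ⟨l, hl⟩ := (Submodule.mem_iSup_of_directed W hdir).1 hb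
      exact ⟨l, b, hl, by rwa [← dist_eq_norm]⟩
    · rintro ⟨l, w, hw, hd⟩
      exact ⟨w, (Submodule.mem_iSup_of_directed W hdir).2 ⟨l, hw⟩, by rwa [dist_eq_norm]⟩
  have hWG : ∀ m, W m ≤ G := fun m => (le_iSup W m).trans (Submodule.le_topologicalClosure _)
  have hGcl : IsClosed (G : Set H) := Submodule.isClosed_topologicalClosure _
  have hUG : ∀ x ∈ G, U x ∈ G := by
    intro x hx
    rw [hGmem] at hx ⊢
    intro δ hδ
    obtain ⟨l, w, hw, hd⟩ := hx δ hδ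
    exact ⟨l+1, U w, hUW _ _ hw, by rwa [← map_sub, U.norm_map]⟩
  have hVG : ∀ n, ∀ x ∈ G, V n x ∈ G := by
    intro n x hx
    rw [hV]
    induction n with
    | zero => exact hx
    | succ n ih => rw [Function.iterate_succ_apply']; exact hUG _ ih
  -- angle, extended
  have hang2 : ∀ m, ∀ f ∈ W m, ∀ h ∈ G,
      2 * inner ℝ f (V m h) ≤ (1 - c) * (‖f‖^2 + ‖h‖^2) + 2 * c * (inner ℝ f e * inner ℝ h e) := by
    intro m f hf
    have hcl : IsClosed {h : H | 2 * inner ℝ f (V m h) ≤ (1 - c) * (‖f‖^2 + ‖h‖^2) + 2 * c * (inner ℝ f e * inner ℝ h e)} := by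
      have : Continuous (V m) := (V m).continuous
      apply isClosed_le <;> fun_prop
    intro h hh
    have : (G : Set H) ⊆ {h : H | 2 * inner ℝ f (V m h) ≤ (1 - c) * (‖f‖^2 + ‖h‖^2) + 2 * c * (inner ℝ f e * inner ℝ h e)} := by
      rw [hG, Submodule.topologicalClosure_coe]
      apply closure_minimal _ hcl
      intro x hx
      obtain ⟨l, hl⟩ := (Submodule.mem_iSup_of_directed W hdir).1 hx
      exact hang m l f hf x hl
    exact this hh
  -- F n
  set F : ℕ → Submodule ℝ H := fun n => G.map (V n).toLinearMap with hF
  have hFcl : ∀ n, IsClosed (F n : Set H) := by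
    intro n
    have : (F n : Set H) = (V n) '' (G : Set H) := by simp [hF]
    rw [this]
    exact (V n).isometry.isClosedEmbedding.isClosedMap _ hGcl
  have hFmem : ∀ n x, x ∈ F n ↔ ∃ y ∈ G, V n y = x := by
    intro n x; simp [hF]
  have hFanti : Antitone F := by
    apply antitone_nat_of_succ_le
    intro n x hx
    obtain ⟨y, hy, rfl⟩ := (hFmem _ _).1 hx
    exact (hFmem _ _).2 ⟨U y, hUG _ hy, by rw [hV, hV, Function.iterate_succ_apply]⟩
  have hcomp : ∀ n, CompleteSpace (F n) := fun n => (hFcl n).completeSpace_coe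
  have hinf : ∀ h : H, (∀ n, h ∈ F n) → h = (inner ℝ h e : ℝ) • e := by
    intro h hh
    have hhG : h ∈ G := by
      obtain ⟨y, hy, rfl⟩ := (hFmem _ _).1 (hh 0)
      exact hVG _ _ hy
    have h1 : ∀ m, ∀ f ∈ W m, 2 * inner ℝ f h ≤ (1 - c) * (‖f‖^2 + ‖h‖^2) + 2 * c * (inner ℝ f e * inner ℝ h e) := by
      intro m f hf
      obtain ⟨y, hy, hyh⟩ := (hFmem _ _).1 (hh m)
      have := hang2 m f hf y hy
      have e1 : ‖h‖ = ‖y‖ := by rw [← hyh, (V m).norm_map]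
      have e2 : inner ℝ h e = inner ℝ y e := by
        rw [← hyh]; nth_rewrite 1 [← hVe m]; rw [(V m).inner_map_map]
      rw [e1, e2, ← hyh]; exact this
    have hcl : IsClosed {f : H | 2 * inner ℝ f h ≤ (1 - c) * (‖f‖^2 + ‖h‖^2) + 2 * c * (inner ℝ f e * inner ℝ h e)} := by
      apply isClosed_le <;> fun_prop
    have h2 : (G : Set H) ⊆ {f : H | 2 * inner ℝ f h ≤ (1 - c) * (‖f‖^2 + ‖h‖^2) + 2 * c * (inner ℝ f e * inner ℝ h e)} := by
      rw [hG, Submodule.topologicalClosure_coe]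
      apply closure_minimal _ hcl
      intro x hx
      obtain ⟨l, hl⟩ := (Submodule.mem_iSup_of_directed W hdir).1 hx
      exact h1 l x hl
    have h3 := h2 hhG
    simp only [Set.mem_ofPred_eq, real_inner_self_eq_norm_sq] at h3
    have h4 : ‖h‖^2 ≤ (inner ℝ h e : ℝ)^2 := by nlinarith
    have h5 : ‖h - (inner ℝ h e : ℝ) • e‖^2 ≤ 0 := by
      rw [norm_sub_sq_real, inner_smul_right, norm_smul, he]
      simp only [Real.norm_eq_abs, mul_one, sq_abs]
      nlinarith
    have h6 : ‖h - (inner ℝ h e : ℝ) • e‖ = 0 := by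
      have := norm_nonneg (h - (inner ℝ h e : ℝ) • e); nlinarith
    exact sub_eq_zero.1 (norm_eq_zero.1 h6)
  -- decay for f in G, g ⟂ e
  have hdec : ∀ f ∈ G, ∀ g : H, inner ℝ g e = 0 → Tendsto (fun n => inner ℝ (V n f) g) atTop (nhds 0) := by
    intro f hf g hg
    have hmono : Monotone (fun n => (F n)ᗮ) := fun a b hab => Submodule.orthogonal_le (hFanti hab)
    have hgm : g ∈ (⨆ n, (F n)ᗮ).topologicalClosure := by
      rw [← Submodule.orthogonal_orthogonal_eq_closure, ← Submodule.iInf_orthogonal, Submodule.mem_orthogonal]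
      intro u hu
      have : ∀ n, u ∈ F n := by
        intro n
        have := (Submodule.mem_iInf _).1 hu n
        rwa [Submodule.orthogonal_orthogonal] at this
      rw [hinf u this, inner_smul_left, show inner ℝ e g = 0 from by rw [real_inner_comm]; exact hg]; simp
    have ht := Submodule.starProjection_tendsto_closure_iSup (fun n => (F n)ᗮ) hmono g
    rw [Submodule.starProjection_eq_self_iff.2 hgm] at ht
    have ht2 : Tendsto (fun n => ‖f‖ * ‖g - ((F n)ᗮ).starProjection g‖) atTop (nhds 0) := by
      have := ((tendsto_const_nhds (x := g)).sub ht).norm.const_mul ‖f‖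
      simpa using this
    apply squeeze_zero_norm _ ht2
    intro n
    have : inner ℝ (V n f) g = inner ℝ (V n f) (g - ((F n)ᗮ).starProjection g) := by
      rw [inner_sub_right]
      have : inner ℝ (V n f) (((F n)ᗮ).starProjection g) = 0 :=
        Submodule.inner_right_of_mem_orthogonal ((hFmem _ _).2 ⟨f, hf, rfl⟩) (Submodule.starProjection_apply_mem _ _)
      rw [this, sub_zero]
    rw [this]
    refine (norm_inner_le_norm _ _).trans ?_
    rw [(V n).norm_map]
  -- f arbitrary, g ⟂ e
  have hdec2 : ∀ f g : H, inner ℝ g e = 0 → Tendsto (fun n => inner ℝ (V n f) g) atTop (nhds 0) := by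
    intro f g hg
    rw [Metric.tendsto_atTop]
    intro δ hδ
    obtain ⟨m, l, w, hw, hd⟩ := happ f (δ / 2 / (‖g‖ + 1)) (by positivity)
    have hgm : inner ℝ (V m g) e = 0 := by
      nth_rewrite 1 [← hVe m]; rw [(V m).inner_map_map, hg]
    obtain ⟨N, hN⟩ := Metric.tendsto_atTop.1 (hdec w (hWG _ hw) (V m g) hgm) (δ/2) (by positivity)
    refine ⟨N, fun n hn => ?_⟩
    have h1 := hN n hn
    rw [Real.dist_eq, sub_zero] at h1 ⊢
    have e1 : inner ℝ (V n f) g = inner ℝ (V n (V m f - w)) (V m g) + inner ℝ (V n w) (V m g) := by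
      rw [← inner_add_left, ← map_add, sub_add_cancel, ← hVadd, add_comm n m, hVadd, (V m).inner_map_map]
    rw [e1]
    have h2 : |inner ℝ (V n (V m f - w)) (V m g)| ≤ δ / 2 := by
      refine (abs_real_inner_le_norm _ _).trans ?_
      rw [(V n).norm_map, (V m).norm_map]
      have : ‖V m f - w‖ * ‖g‖ ≤ δ / 2 / (‖g‖ + 1) * (‖g‖ + 1) := by
        gcongr; linarith
      rwa [div_mul_cancel₀ _ (by positivity)] at this
    exact (abs_add_le _ _).trans_lt (by linarith)
  have hfin := hdec2 f (g - (inner ℝ g e : ℝ) • e) (by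
    rw [inner_sub_left, inner_smul_left, real_inner_self_eq_norm_sq, he]; simp)
  have := hfin.add_const (inner ℝ f e * inner ℝ g e)
  rw [zero_add] at this
  refine this.congr fun n => ?_
  have : inner ℝ (V n f) e = inner ℝ f e := by
    nth_rewrite 1 [← hVe n]; rw [(V n).inner_map_map]
  rw [inner_sub_right, inner_smul_right, this]; ring

theorem norm_iterate_aux {H : Type*} [NormedAddCommGroup H] [InnerProductSpace ℝ H]
    (U : H →ₗᵢ[ℝ] H) (h : H) (n : ℕ) : ‖U^[n] h‖ = ‖h‖ := by
  induction n with
  | zero => rfl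
  | succ k ih => rw [Function.iterate_succ_apply', U.norm_map, ih]

theorem measure_le_of_singleton {α : Type*} [MeasurableSpace α] [Countable α]
    [MeasurableSingletonClass α] (μ ν : Measure α) (h : ∀ a, μ {a} ≤ ν {a}) : μ ≤ ν := by
  rw [Measure.le_iff]
  intro s _
  have hs : s.Countable := Set.to_countable s
  have key : ∀ ρ : Measure α, ρ s = ∑' p : s, ρ {(p : α)} := by
    intro ρ
    conv_lhs => rw [← Set.biUnion_of_singleton s]
    rw [measure_biUnion hs]
    · intro a _ b _ hab; simpa using hab
    · intro a _; exact measurableSet_singleton a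
  rw [key, key]
  exact ENNReal.tsum_le_tsum fun p => h p

theorem L2_inner_eq {X : Type*} [MeasurableSpace X] {μ : Measure X} (f g : Lp ℝ 2 μ) (F G : X → ℝ)
    (hF : f =ᵐ[μ] F) (hG : g =ᵐ[μ] G) : inner ℝ f g = ∫ x, F x * G x ∂μ := by
  rw [L2.inner_def]
  apply integral_congr_ae
  filter_upwards [hF, hG] with x h1 h2
  rw [h1, h2]; simp [mul_comm]

/-- itinerary of length `l` -/
def pword {X : Type*} (T : X → X) (κ : X → ℤ) (l : ℕ) (x : X) : Fin l → ℤ := fun j => κ (T^[j] x)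

set_option maxHeartbeats 1600000 in
theorem qb_mixing {X : Type*} [MeasurableSpace X] [TopologicalSpace X] [BorelSpace X]
    [NormalSpace X] [SecondCountableTopologyEither X ℝ]
    (μ : Measure X) [IsProbabilityMeasure μ] [μ.WeaklyRegular]
    (T : X → X) (hT : MeasurePreserving T μ μ) (κ : X → ℤ) (hκ : Measurable κ)
    (c : ℝ) (hc : 0 < c)
    (hqb : ∀ m l (a : Fin m → ℤ) (b : Fin l → ℤ),
      ENNReal.ofReal c * (μ {x | pword T κ m x = a} * μ {x | pword T κ l x = b}) ≤
        μ {x | pword T κ m x = a ∧ pword T κ l (T^[m] x) = b})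
    (happ : ∀ g : BoundedContinuousFunction X ℝ, ∀ δ > 0, ∃ m l, ∃ φ : (Fin l → ℤ) → ℝ,
      ∀ᵐ x ∂μ, |g (T^[m] x) - φ (pword T κ l x)| ≤ δ)
    (A B : Set X) (hA : MeasurableSet A) (hB : MeasurableSet B) :
    Tendsto (fun n : ℕ => μ (T^[n] ⁻¹' A ∩ B)) atTop (nhds (μ A * μ B)) := by
  have hTn : ∀ n, MeasurePreserving (T^[n]) μ μ := fun n => hT.iterate n
  have hpw : ∀ l, Measurable (pword T κ l) := by
    intro l
    rw [measurable_pi_iff]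
    intro j
    exact hκ.comp (hTn j).measurable
  set U : Lp ℝ 2 μ →ₗᵢ[ℝ] Lp ℝ 2 μ := Lp.compMeasurePreservingₗᵢ ℝ T hT with hU
  have hUn : ∀ n (f : Lp ℝ 2 μ), (U^[n] f : X → ℝ) =ᵐ[μ] f ∘ (T^[n]) := by
    intro n f
    have : U^[n] f = Lp.compMeasurePreserving (T^[n]) (hTn n) f := by
      have := Lp.compMeasurePreserving_iterate (E := ℝ) (p := 2) hT n
      exact congrFun this f
    rw [this]
    exact Lp.coeFn_compMeasurePreserving _ _
  set e : Lp ℝ 2 μ := indicatorConstLp 2 (μ := μ) MeasurableSet.univ (measure_ne_top _ _) (1:ℝ) with he_def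
  have he1 : (e : X → ℝ) =ᵐ[μ] fun _ => 1 := by
    have := indicatorConstLp_coeFn (p := 2) (μ := μ) (hs := MeasurableSet.univ) (hμs := measure_ne_top _ _) (c := (1:ℝ))
    filter_upwards [this] with x hx
    rw [he_def, hx]; simp
  let W : ℕ → Submodule ℝ (Lp ℝ 2 μ) := fun l =>
    { carrier := {f | ∃ φ : (Fin l → ℤ) → ℝ, f =ᵐ[μ] fun x => φ (pword T κ l x)}
      add_mem' := by
        rintro f g ⟨φ, hφ⟩ ⟨ψ, hψ⟩
        refine ⟨φ + ψ, ?_⟩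
        filter_upwards [hφ, hψ, Lp.coeFn_add f g] with x h1 h2 h3
        rw [h3]; simp [h1, h2]
      zero_mem' := ⟨0, by
        filter_upwards [Lp.coeFn_zero (E := ℝ) (p := 2) (μ := μ)] with x h1
        rw [h1]; simp⟩
      smul_mem' := by
        rintro r f ⟨φ, hφ⟩
        refine ⟨r • φ, ?_⟩
        filter_upwards [hφ, Lp.coeFn_smul r f] with x h1 h3
        rw [h3]; simp [h1] }
  have hWmem : ∀ l f, f ∈ W l ↔ ∃ φ : (Fin l → ℤ) → ℝ, f =ᵐ[μ] fun x => φ (pword T κ l x) := fun l f => Iff.rfl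
  have hmix := fun f g => hilbert_mix U e (by
      have h := L2_inner_eq e e _ _ he1 he1
      rw [real_inner_self_eq_norm_sq] at h
      simp at h
      rcases h with h | h
      · exact h
      · linarith [norm_nonneg e]) (by
      apply Lp.ext
      have := hUn 1 e
      simp only [Function.iterate_one] at this
      filter_upwards [this, he1, (hT.quasiMeasurePreserving.ae he1)] with x h1 h2 h3
      rw [h1, h2]; exact h3) W (by
      apply monotone_nat_of_le_succ
      rintro l f ⟨φ, hφ⟩
      exact ⟨fun w => φ (fun j => w j.castSucc), hφ⟩) (by
      rintro l f ⟨φ, hφ⟩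
      refine ⟨fun w => φ (fun j => w j.succ), ?_⟩
      have := hUn 1 f
      simp only [Function.iterate_one] at this
      filter_upwards [this, hT.quasiMeasurePreserving.ae hφ] with x h1 h2
      rw [h1, Function.comp, h2]
      congr 1) c hc (by
      rintro m l f ⟨φ, hφ⟩ h ⟨ψ, hψ⟩
      have hUh : (U^[m] h : X → ℝ) =ᵐ[μ] fun x => ψ (pword T κ l (T^[m] x)) := by
        filter_upwards [hUn m h, (hTn m).quasiMeasurePreserving.ae hψ] with x h1 h2
        rw [h1, Function.comp, h2]
      have hJm : Measurable (fun x => (pword T κ m x, pword T κ l (T^[m] x))) :=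
        (hpw m).prodMk ((hpw l).comp (hTn m).measurable)
      set ν := μ.map (fun x => (pword T κ m x, pword T κ l (T^[m] x))) with hν
      set ν₁ := μ.map (pword T κ m) with hν₁
      set ν₂ := μ.map (pword T κ l) with hν₂
      have : IsProbabilityMeasure ν₁ := Measure.isProbabilityMeasure_map (hpw m).aemeasurable
      have : IsProbabilityMeasure ν₂ := Measure.isProbabilityMeasure_map (hpw l).aemeasurable
      have hle : ENNReal.ofReal c • (ν₁.prod ν₂) ≤ ν := by
        apply measure_le_of_singleton
        rintro ⟨a, b⟩
        rw [Measure.smul_apply, ← Set.singleton_prod_singleton, Measure.prod_prod, hν, hν₁, hν₂,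
          Measure.map_apply (hpw m) (measurableSet_singleton _),
          Measure.map_apply (hpw l) (measurableSet_singleton _),
          Measure.map_apply hJm ((measurableSet_singleton _).prod (measurableSet_singleton _))]
        refine (hqb m l a b).trans (le_of_eq ?_)
        congr 1
      -- memLp facts
      have hφ1 : MemLp φ 2 ν₁ := by
        rw [hν₁, memLp_map_measure_iff (measurable_of_countable _).aestronglyMeasurable (hpw m).aemeasurable]
        exact (memLp_congr_ae hφ).1 (Lp.memLp f)
      have hψ2 : MemLp ψ 2 ν₂ := by
        rw [hν₂, memLp_map_measure_iff (measurable_of_countable _).aestronglyMeasurable (hpw l).aemeasurable]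
        exact (memLp_congr_ae hψ).1 (Lp.memLp h)
      have hP : MemLp (fun x => φ (pword T κ m x)) 2 μ := (memLp_congr_ae hφ).1 (Lp.memLp f)
      have hQ : MemLp (fun x => ψ (pword T κ l (T^[m] x))) 2 μ := (memLp_congr_ae hUh).1 (Lp.memLp _)
      have hPQ := (hP.sub hQ).integrable_sq
      have hint : Integrable (fun z : (Fin m → ℤ) × (Fin l → ℤ) => (φ z.1 - ψ z.2)^2) ν := by
        rw [hν, integrable_map_measure (measurable_of_countable _).aestronglyMeasurable hJm.aemeasurable]
        exact hPQ
      have hmono := integral_mono_measure hle (ae_of_all _ fun z => sq_nonneg (φ z.1 - ψ z.2)) hint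
      rw [integral_smul_measure, hν, integral_map hJm.aemeasurable (measurable_of_countable _).aestronglyMeasurable,
        ENNReal.toReal_ofReal hc.le, smul_eq_mul] at hmono
      have e1 : ∫ x, (φ (pword T κ m x) - ψ (pword T κ l (T^[m] x)))^2 ∂μ = ‖f - U^[m] h‖^2 := by
        rw [← real_inner_self_eq_norm_sq, L2_inner_eq _ _ (fun x => φ (pword T κ m x) - ψ (pword T κ l (T^[m] x))) (fun x => φ (pword T κ m x) - ψ (pword T κ l (T^[m] x)))]
        · simp only [sq]
        all_goals
          filter_upwards [hφ, hUh, Lp.coeFn_sub f (U^[m] h)] with x h1 h2 h3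
          rw [h3, Pi.sub_apply, h1, h2]
      have n1 : ‖f‖^2 = ∫ a, φ a ^2 ∂ν₁ := by
        rw [← real_inner_self_eq_norm_sq, L2_inner_eq _ _ _ _ hφ hφ, hν₁, integral_map (hpw m).aemeasurable (measurable_of_countable _).aestronglyMeasurable]
        simp only [sq]
      have n2 : ‖h‖^2 = ∫ a, ψ a ^2 ∂ν₂ := by
        rw [← real_inner_self_eq_norm_sq, L2_inner_eq _ _ _ _ hψ hψ, hν₂, integral_map (hpw l).aemeasurable (measurable_of_countable _).aestronglyMeasurable]
        simp only [sq]
      have n3 : inner ℝ f e = ∫ a, φ a ∂ν₁ := by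
        rw [L2_inner_eq _ _ _ _ hφ he1, hν₁, integral_map (hpw m).aemeasurable (measurable_of_countable _).aestronglyMeasurable]
        simp
      have n4 : inner ℝ h e = ∫ a, ψ a ∂ν₂ := by
        rw [L2_inner_eq _ _ _ _ hψ he1, hν₂, integral_map (hpw l).aemeasurable (measurable_of_countable _).aestronglyMeasurable]
        simp
      have n5 : ‖U^[m] h‖ = ‖h‖ := by
        exact norm_iterate_aux U h m
      have e2 : ∫ z, (φ z.1 - ψ z.2)^2 ∂(ν₁.prod ν₂) = ‖f‖^2 + ‖h‖^2 - 2 * (inner ℝ f e * inner ℝ h e) := by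
        have i1 : Integrable (fun z : (Fin m → ℤ) × (Fin l → ℤ) => φ z.1 ^2) (ν₁.prod ν₂) :=
          hφ1.integrable_sq.comp_fst ν₂
        have i2 : Integrable (fun z : (Fin m → ℤ) × (Fin l → ℤ) => ψ z.2 ^2) (ν₁.prod ν₂) :=
          hψ2.integrable_sq.comp_snd ν₁
        have i3 : Integrable (fun z : (Fin m → ℤ) × (Fin l → ℤ) => φ z.1 * ψ z.2) (ν₁.prod ν₂) :=
          (hφ1.integrable (by norm_num)).mul_prod (hψ2.integrable (by norm_num))
        have : ∀ z : (Fin m → ℤ) × (Fin l → ℤ), (φ z.1 - ψ z.2)^2 = φ z.1 ^2 + ψ z.2^2 - 2 * (φ z.1 * ψ z.2) := by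
          intro z; ring
        simp_rw [this]
        have i12 : Integrable (fun z : (Fin m → ℤ) × (Fin l → ℤ) => φ z.1 ^2 + ψ z.2 ^2) (ν₁.prod ν₂) := i1.add i2
        rw [integral_sub i12 (i3.const_mul 2), integral_add i1 i2, integral_const_mul,
          integral_prod_mul, n1, n2, n3, n4]
        rw [integral_fun_fst (fun a => φ a ^ 2), integral_fun_snd (fun a => ψ a ^ 2)]
        simp
      rw [e1, e2, norm_sub_sq_real, n5] at hmono
      nlinarith) (by
      intro f δ hδ
      obtain ⟨g, hg⟩ := (BoundedContinuousFunction.toLp_denseRange (p := 2) ℝ μ ℝ (by norm_num)).exists_dist_lt f (half_pos hδ)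
      obtain ⟨m, l, φ, hφ⟩ := happ g (δ/4) (by positivity)
      have hgm : MemLp g 2 μ := by
        have := (memLp_congr_ae (BoundedContinuousFunction.coeFn_toLp (p := 2) (𝕜 := ℝ) μ g)).1 (Lp.memLp _)
        exact this
      have hgT : MemLp (fun x => g (T^[m] x)) 2 μ := hgm.comp_measurePreserving (hTn m)
      have hdm : AEStronglyMeasurable (fun x => g (T^[m] x) - φ (pword T κ l x)) μ :=
        hgT.1.sub ((measurable_of_countable φ).comp (hpw l)).aestronglyMeasurable
      have hd : MemLp (fun x => g (T^[m] x) - φ (pword T κ l x)) 2 μ :=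
        MemLp.of_bound hdm (δ/4) hφ
      have hw : MemLp (fun x => φ (pword T κ l x)) 2 μ := by
        have := hgT.sub hd
        refine (memLp_congr_ae (ae_of_all _ fun x => ?_)).1 this
        simp
      refine ⟨m, l, hw.toLp _, ⟨φ, hw.coeFn_toLp⟩, ?_⟩
      have h1 : ‖U^[m] f - U^[m] (BoundedContinuousFunction.toLp 2 μ ℝ g)‖ < δ/2 := by
        rw [← dist_eq_norm]
        have : Isometry (U^[m]) := by
          clear hgT hdm hd hφ
          induction m with
          | zero => exact isometry_id
          | succ k ih => rw [Function.iterate_succ]; exact ih.comp U.isometry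
        rw [this.dist_eq]; exact hg
      have h2 : ‖U^[m] (BoundedContinuousFunction.toLp 2 μ ℝ g) - hw.toLp _‖ ≤ δ/4 := by
        have := Lp.norm_le_of_ae_bound (p := 2) (μ := μ) (f := U^[m] (BoundedContinuousFunction.toLp 2 μ ℝ g) - hw.toLp _) (C := δ/4) (by positivity) ?_
        · have hu : measureUnivNNReal μ = 1 := by simp [measureUnivNNReal]
          simpa [hu] using this
        · filter_upwards [Lp.coeFn_sub (U^[m] (BoundedContinuousFunction.toLp 2 μ ℝ g)) (hw.toLp _), hw.coeFn_toLp, hUn m (BoundedContinuousFunction.toLp 2 μ ℝ g), (hTn m).quasiMeasurePreserving.ae (BoundedContinuousFunction.coeFn_toLp (p := 2) (𝕜 := ℝ) μ g), hφ] with x h1 h2 h3 h4 h5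
          rw [h1, Pi.sub_apply, h2, h3, Function.comp, h4]
          exact h5
      calc _ ≤ ‖U^[m] f - U^[m] (BoundedContinuousFunction.toLp 2 μ ℝ g)‖ + ‖U^[m] (BoundedContinuousFunction.toLp 2 μ ℝ g) - hw.toLp _‖ := norm_sub_le_norm_sub_add_norm_sub _ _ _
        _ < δ := by linarith) f g
  have hfin := hmix (indicatorConstLp 2 hA (measure_ne_top _ _) (1:ℝ)) (indicatorConstLp 2 hB (measure_ne_top _ _) (1:ℝ))
  have hAe : ∀ {S : Set X} (hS : MeasurableSet S), (indicatorConstLp 2 (μ := μ) hS (measure_ne_top _ _) (1:ℝ) : X → ℝ) =ᵐ[μ] S.indicator 1 := by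
    intro S hS
    exact indicatorConstLp_coeFn
  have k1 : ∀ {S : Set X} (hS : MeasurableSet S), inner ℝ (indicatorConstLp 2 (μ := μ) hS (measure_ne_top _ _) (1:ℝ)) e = μ.real S := by
    intro S hS
    rw [L2_inner_eq _ _ _ _ (hAe hS) he1]
    simp [integral_indicator_one hS]
  rw [k1, k1] at hfin
  have k2 : ∀ n, inner ℝ (U^[n] (indicatorConstLp 2 hA (measure_ne_top _ _) (1:ℝ))) (indicatorConstLp 2 hB (measure_ne_top _ _) (1:ℝ)) = μ.real (T^[n] ⁻¹' A ∩ B) := by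
    intro n
    rw [L2_inner_eq _ _ (fun x => A.indicator 1 (T^[n] x)) _ ?_ (hAe hB)]
    · rw [← integral_indicator_one (((hTn n).measurable hA).inter hB)]
      congr 1; ext x
      by_cases h1 : x ∈ B <;> by_cases h2 : T^[n] x ∈ A <;> simp [h1, h2]
    · filter_upwards [hUn n (indicatorConstLp 2 hA (measure_ne_top _ _) (1:ℝ)), (hTn n).quasiMeasurePreserving.ae (hAe hA)] with x h1 h2
      rw [h1, Function.comp, h2]
  simp_rw [k2] at hfin
  have := ENNReal.tendsto_ofReal hfin
  rw [ENNReal.ofReal_mul measureReal_nonneg] at this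
  simpa [ofReal_measureReal] using this

structure ExpPot (f : ℝ → ℝ) where
  b : ℝ → ℝ → ℝ
  σ : ℝ
  L : ℝ
  C : ℝ
  hσ : σ * σ = 1
  hL : 2 < L
  hC : 0 ≤ C
  hb : ∀ x y, L ≤ b x y
  hf : ∀ x y, |x| < 1/2 → |y| < 1/2 → f x - f y = σ * b x y * (x - y)
  hcomp : ∀ x y x' y' η, |x| < 1/2 → |y| < 1/2 → |x'| < 1/2 → |y'| < 1/2 → 0 ≤ η → η ≤ 2 →
    |x - x'| ≤ η → |y - y'| ≤ η → |f x - f x'| ≤ η → |f y - f y'| ≤ η →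
    b x y ≤ (1 + C * η) * b x' y'
  surj : ∀ v, ∃ x, |x| < 1/2 ∧ f x = v

def IsChain' (f : ℝ → ℝ) (n : ℕ) (a : ℕ → ℤ) (q : ℕ → ℝ) : Prop :=
  (∀ j ≤ n + 1, |q j| < 1/2) ∧ ∀ j < n, q (j+2) = f (q (j+1)) - q j - a j

noncomputable def tseq (b : ℕ → ℝ) : ℕ → ℝ
  | 0 => b 0
  | (j+1) => b (j+1) - 1 / tseq b j

theorem tseq_ge (L : ℝ) (hL : 2 < L) (b : ℕ → ℝ) (hb : ∀ j, L ≤ b j) (j : ℕ) : L / 2 ≤ tseq b j := by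
  induction j with
  | zero => have := hb 0; simp only [tseq]; linarith
  | succ j ih =>
    simp only [tseq]
    have : 1 / tseq b j ≤ 1 := by rw [div_le_one (by linarith)]; linarith
    have h2 : 1 / tseq b j ≤ 1 / (L/2) := by gcongr
    have h3 : 1 / (L/2) ≤ L / 2 := by
      rw [div_le_iff₀ (by linarith)]; nlinarith
    have := hb (j+1)
    linarith

theorem prodcomp (L : ℝ) (hL : 2 < L) (b b' t t' α : ℕ → ℝ) (n : ℕ)
    (hb' : ∀ j < n, L ≤ b' j) (hα : ∀ j < n, 0 ≤ α j)
    (hbb : ∀ j < n, b j ≤ (1 + α j) * b' j)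
    (ht : ∀ j < n, L / 2 ≤ t j) (ht' : ∀ j < n, L / 2 ≤ t' j)
    (h0 : 0 < n → t 0 ≤ b 0) (h0' : 0 < n → b' 0 - 1 ≤ t' 0)
    (hs : ∀ j, j + 1 < n → t (j+1) = b (j+1) - 1 / t j)
    (hs' : ∀ j, j + 1 < n → t' (j+1) = b' (j+1) - 1 / t' j) :
    ∏ j ∈ Finset.range n, t j ≤
      Real.exp ((1 + 2 * ∑ j ∈ Finset.range n, α j) / (1 - (2/L)^2)) * ∏ j ∈ Finset.range n, t' j := by
  set κ : ℝ := (2/L)^2 with hκ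
  have hκ0 : 0 ≤ κ := sq_nonneg _
  have hθ1 : 2 / L < 1 := by rw [div_lt_one (by linarith)]; exact hL
  have hθ0 : 0 < 2 / L := by positivity
  have hκ1 : κ < 1 := by rw [hκ]; nlinarith
  let Δ : ℕ → ℝ := fun j => Nat.rec (1 + 2 * α 0) (fun j d => 2 * α (j+1) + κ * d) j
  have hΔ0 : Δ 0 = 1 + 2 * α 0 := rfl
  have hΔs : ∀ j, Δ (j+1) = 2 * α (j+1) + κ * Δ j := fun j => rfl
  have hb't : ∀ j < n, b' j ≤ 2 * t' j := by
    intro j hj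
    have h1 : b' j - 1 ≤ t' j := by
      rcases j with _ | j
      · exact h0' hj
      · rw [hs' j hj]
        have := ht' j (by omega)
        have : 1 / t' j ≤ 1 := by rw [div_le_one (by linarith)]; linarith
        linarith
    have := ht' j hj
    linarith [hb' j hj]
  have hΔnn : ∀ j < n, 0 ≤ Δ j := by
    intro j
    induction j with
    | zero => intro hj; have := hα 0 hj; rw [hΔ0]; linarith
    | succ j ih =>
      intro hj
      have := hα _ hj
      have := ih (by omega)
      rw [hΔs]; positivity
  have key : ∀ j < n, t j ≤ (1 + Δ j) * t' j := by
    intro j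
    induction j with
    | zero =>
      intro hj
      have h1 := h0 hj
      have h2 := hbb 0 hj
      have h3 := hb't 0 hj
      have h4 := hα 0 hj
      rw [hΔ0]
      have := mul_le_mul_of_nonneg_left h3 (by linarith : 0 ≤ 1 + α 0)
      nlinarith
    | succ j ih =>
      intro hj
      have ih := ih (by omega)
      have hd := hΔnn j (by omega)
      have htj := ht j (by omega)
      have htj' := ht' j (by omega)
      have ht1' := ht' (j+1) hj
      have h2 := hbb (j+1) hj
      have h3 := hb't (j+1) hj
      have h4 := hα (j+1) hj
      have e1 := hs j hj
      have e2 := hs' j hj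
      have i1 : 1 / t' j - 1 / t j ≤ Δ j / t' j := by
        have : 1 / ((1 + Δ j) * t' j) ≤ 1 / t j := by
          apply one_div_le_one_div_of_le (by linarith) ih
        have h5 : 1 / t' j - 1 / ((1 + Δ j) * t' j) ≤ Δ j / t' j := by
          have hp : 0 < t' j := by linarith
          have : 1 / t' j - 1 / ((1 + Δ j) * t' j) = (Δ j / (1 + Δ j)) / t' j := by
            field_simp; ring
          rw [this]
          gcongr
          exact div_le_self hd (by linarith)
        linarith
      have i2 : 1 / t' j ≤ κ * t' (j+1) := by
        have a1 : 1 / t' j ≤ 2 / L := by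
          rw [div_le_div_iff₀ (by linarith) (by linarith)]; linarith
        have a2 : 1 ≤ (2/L) * t' (j+1) := by
          have : (2/L) * (L/2) = 1 := by field_simp
          rw [← this]; gcongr
        calc 1 / t' j ≤ 2 / L := a1
          _ ≤ (2/L) * ((2/L) * t' (j+1)) := by nlinarith
          _ = _ := by rw [hκ]; ring
      have i3 : Δ j / t' j ≤ Δ j * (κ * t' (j+1)) := by
        rw [div_eq_mul_one_div]; gcongr
      rw [hΔs, e1]
      have i4 : α (j+1) * b' (j+1) ≤ α (j+1) * (2 * t' (j+1)) := by gcongr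
      nlinarith
  have hsum : ∀ k ≤ n, (1 - κ) * ∑ j ∈ Finset.range k, Δ j ≤ 1 + 2 * ∑ j ∈ Finset.range k, α j := by
    intro k hk
    have hex : ∑ j ∈ Finset.range k, Δ j ≤ 1 + 2 * ∑ j ∈ Finset.range k, α j + κ * ∑ j ∈ Finset.range k, Δ j := by
      rcases k with _ | k
      · simp
      · rw [Finset.sum_range_succ' Δ, Finset.sum_range_succ' α]
        simp only [hΔs, hΔ0]
        rw [Finset.sum_add_distrib, ← Finset.mul_sum, ← Finset.mul_sum]
        have : ∑ j ∈ Finset.range k, Δ j ≤ ∑ j ∈ Finset.range k, Δ (j+1) + Δ 0 := by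
          rw [← Finset.sum_range_succ' Δ, Finset.sum_range_succ]
          have := hΔnn k (by omega); linarith
        simp only [hΔs, hΔ0] at this
        rw [Finset.sum_add_distrib, ← Finset.mul_sum, ← Finset.mul_sum] at this
        have := mul_le_mul_of_nonneg_left this hκ0
        linarith
    linarith
  calc ∏ j ∈ Finset.range n, t j ≤ ∏ j ∈ Finset.range n, (Real.exp (Δ j) * t' j) := by
        apply Finset.prod_le_prod
        · intro j hj
          have := ht j (Finset.mem_range.1 hj); linarith
        · intro j hj
          have hj := Finset.mem_range.1 hj
          refine (key j hj).trans ?_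
          have := ht' j hj
          have h2 := Real.add_one_le_exp (Δ j)
          apply mul_le_mul_of_nonneg_right _ (by linarith)
          linarith
    _ = Real.exp (∑ j ∈ Finset.range n, Δ j) * ∏ j ∈ Finset.range n, t' j := by
        rw [Finset.prod_mul_distrib, Real.exp_sum]
    _ ≤ _ := by
        apply mul_le_mul_of_nonneg_right
        · apply Real.exp_le_exp.2
          rw [le_div_iff₀ (by linarith)]
          have := hsum n le_rfl
          linarith
        · apply Finset.prod_nonneg
          intro j hj
          have := ht' j (Finset.mem_range.1 hj); linarith

theorem chain_close {f : ℝ → ℝ} (D : ExpPot f) {n : ℕ} {a : ℕ → ℤ} {q q' : ℕ → ℝ}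
    (hq : IsChain' f n a q) (hq' : IsChain' f n a q') (k : ℕ) :
    ∀ j, k ≤ j → j + k ≤ n + 1 → |q j - q' j| ≤ (2/D.L)^k := by
  have hL := D.hL
  induction k with
  | zero =>
    intro j _ hj
    have h1 := hq.1 j (by omega)
    have h2 := hq'.1 j (by omega)
    rw [abs_lt] at h1 h2
    rw [pow_zero, abs_le]; constructor <;> linarith
  | succ k ih =>
    intro j hkj hj
    obtain ⟨i, rfl⟩ : ∃ i, j = i + 1 := ⟨j - 1, by omega⟩
    have e1 := hq.2 i (by omega)
    have e2 := hq'.2 i (by omega)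
    have h1 := ih i (by omega) (by omega)
    have h2 := ih (i+2) (by omega) (by omega)
    have h3 := D.hf _ _ (hq.1 (i+1) (by omega)) (hq'.1 (i+1) (by omega))
    have h4 : |f (q (i+1)) - f (q' (i+1))| ≤ 2 * (2/D.L)^k := by
      have : f (q (i+1)) - f (q' (i+1)) = (q (i+2) - q' (i+2)) + (q i - q' i) := by linarith
      rw [this]
      exact (abs_add_le _ _).trans (by linarith)
    have hs1 : |D.σ| = 1 := by
      have : |D.σ| * |D.σ| = 1 := by rw [← abs_mul, D.hσ, abs_one]
      nlinarith [abs_nonneg D.σ]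
    rw [h3, abs_mul, abs_mul, hs1, one_mul] at h4
    have hb := D.hb (q (i+1)) (q' (i+1))
    rw [abs_of_pos (by linarith)] at h4
    have h5 : D.L * |q (i+1) - q' (i+1)| ≤ 2 * (2/D.L)^k :=
      (mul_le_mul_of_nonneg_right hb (abs_nonneg _)).trans h4
    rw [pow_succ]
    calc |q (i+1) - q' (i+1)| = (D.L * |q (i+1) - q' (i+1)|) / D.L := by field_simp
      _ ≤ (2 * (2/D.L)^k) / D.L := by gcongr
      _ = _ := by ring

theorem chain_f_close {f : ℝ → ℝ} (D : ExpPot f) {n : ℕ} {a : ℕ → ℤ} {q q' : ℕ → ℝ}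
    (hq : IsChain' f n a q) (hq' : IsChain' f n a q') (k j : ℕ) (h1 : k ≤ j) (h2 : j + k < n) :
    |q (j+1) - q' (j+1)| ≤ 2 * (2/D.L)^k ∧ |f (q (j+1)) - f (q' (j+1))| ≤ 2 * (2/D.L)^k := by
  have hL := D.hL
  constructor
  · have := chain_close D hq hq' k (j+1) (by omega) (by omega)
    have h0 : 0 ≤ (2/D.L)^k := by positivity
    linarith
  · have a1 := chain_close D hq hq' k j (by omega) (by omega)
    have a2 := chain_close D hq hq' k (j+2) (by omega) (by omega)
    have e1 := hq.2 j (by omega)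
    have e2 := hq'.2 j (by omega)
    have : f (q (j+1)) - f (q' (j+1)) = (q (j+2) - q' (j+2)) + (q j - q' j) := by linarith
    rw [this]
    exact (abs_add_le _ _).trans (by linarith)

theorem chain_b_comp {f : ℝ → ℝ} (D : ExpPot f) {n : ℕ} {a : ℕ → ℤ} {x y x' y' : ℕ → ℝ}
    (hx : IsChain' f n a x) (hy : IsChain' f n a y) (hx' : IsChain' f n a x') (hy' : IsChain' f n a y')
    (j : ℕ) (hj : j < n) :
    D.b (x (j+1)) (y (j+1)) ≤ (1 + 2 * D.C * ((2/D.L)^j + (2/D.L)^(n-1-j))) * D.b (x' (j+1)) (y' (j+1)) := by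
  have hL := D.hL
  have hC := D.hC
  set k := min j (n-1-j) with hk
  have k1 : k ≤ j := min_le_left _ _
  have k2 : j + k < n := by omega
  have hθ1 : 2 / D.L ≤ 1 := by rw [div_le_one (by linarith)]; linarith
  have hp1 : (2/D.L)^k ≤ 1 := pow_le_one₀ (by positivity) hθ1
  have hp0 : 0 ≤ (2/D.L)^k := by positivity
  have c1 := chain_f_close D hx hx' k j k1 k2
  have c2 := chain_f_close D hy hy' k j k1 k2
  refine (D.hcomp _ _ (x' (j+1)) (y' (j+1)) (2 * (2/D.L)^k) (hx.1 _ (by omega)) (hy.1 _ (by omega))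
    (hx'.1 _ (by omega)) (hy'.1 _ (by omega)) (by positivity) (by linarith) c1.1 c2.1 c1.2 c2.2).trans ?_
  have hb := D.hb (x' (j+1)) (y' (j+1))
  apply mul_le_mul_of_nonneg_right _ (by linarith)
  have : (2/D.L)^k ≤ (2/D.L)^j + (2/D.L)^(n-1-j) := by
    have q1 : 0 ≤ (2/D.L)^j := by positivity
    have q2 : 0 ≤ (2/D.L)^(n-1-j) := by positivity
    rcases min_choice j (n-1-j) with h | h <;> rw [hk, h] <;> linarith
  nlinarith

noncomputable def ExpPot.t {f : ℝ → ℝ} (D : ExpPot f) (x y : ℕ → ℝ) : ℕ → ℝ :=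
  tseq (fun j => D.b (x (j+1)) (y (j+1)))

theorem ExpPot.t_ge {f : ℝ → ℝ} (D : ExpPot f) (x y : ℕ → ℝ) (j : ℕ) : D.L / 2 ≤ D.t x y j :=
  tseq_ge D.L D.hL _ (fun _ => D.hb _ _) j

noncomputable def ExpPot.S {f : ℝ → ℝ} (D : ExpPot f) : ℝ :=
  Real.exp ((1 + 2 * (2 * D.C * (2 * (1 - 2/D.L)⁻¹))) / (1 - (2/D.L)^2))

/-- comparison of products along a window starting at `s` -/
theorem window_comp {f : ℝ → ℝ} (D : ExpPot f) {n : ℕ} {a : ℕ → ℤ} {x y x' y' : ℕ → ℝ} (s s' : ℕ)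
    (hx : IsChain' f n a (fun j => x (s + j))) (hy : IsChain' f n a (fun j => y (s + j)))
    (hx' : IsChain' f n a (fun j => x' (s' + j))) (hy' : IsChain' f n a (fun j => y' (s' + j))) :
    ∏ j ∈ Finset.range n, D.t x y (s + j) ≤ D.S * ∏ j ∈ Finset.range n, D.t x' y' (s' + j) := by
  have hL := D.hL
  have hC := D.hC
  have hθ1 : 2 / D.L < 1 := by rw [div_lt_one (by linarith)]; linarith
  have hθ0 : 0 ≤ 2 / D.L := by positivity
  have start : ∀ (x y : ℕ → ℝ) s, D.t x y s ≤ D.b (x (s+1)) (y (s+1)) ∧ D.b (x (s+1)) (y (s+1)) - 1 ≤ D.t x y s := by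
    intro x y s
    rcases s with _ | s
    · simp [ExpPot.t, tseq]
    · have h := D.t_ge x y s
      have : D.t x y (s+1) = D.b (x (s+1+1)) (y (s+1+1)) - 1 / D.t x y s := rfl
      rw [this]
      have i1 : 1 / D.t x y s ≤ 1 := by rw [div_le_one (by linarith)]; linarith
      have i2 : 0 ≤ 1 / D.t x y s := by
        apply div_nonneg <;> linarith
      constructor <;> linarith
  refine (prodcomp D.L hL (fun j => D.b (x (s+j+1)) (y (s+j+1))) (fun j => D.b (x' (s'+j+1)) (y' (s'+j+1)))
    (fun j => D.t x y (s+j)) (fun j => D.t x' y' (s'+j))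
    (fun j => 2 * D.C * ((2/D.L)^j + (2/D.L)^(n-1-j))) n (fun _ _ => D.hb _ _) (fun _ _ => by positivity)
    (fun j hj => chain_b_comp D hx hy hx' hy' j hj) (fun _ _ => D.t_ge _ _ _) (fun _ _ => D.t_ge _ _ _)
    (fun _ => (start _ _ _).1) (fun _ => (start _ _ _).2) (fun _ _ => rfl) (fun _ _ => rfl)).trans ?_
  apply mul_le_mul_of_nonneg_right
  · apply Real.exp_le_exp.2
    have : 0 < 1 - (2/D.L)^2 := by nlinarith
    have hg : ∑ j ∈ Finset.range n, (2/D.L)^j ≤ (1 - 2/D.L)⁻¹ := by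
      rw [← tsum_geometric_of_lt_one hθ0 hθ1]
      exact (summable_geometric_of_lt_one hθ0 hθ1).sum_le_tsum _ (fun _ _ => by positivity)
    have hg2 : ∑ j ∈ Finset.range n, (2/D.L)^(n-1-j) = ∑ j ∈ Finset.range n, (2/D.L)^j :=
      Finset.sum_range_reflect (fun j => (2/D.L)^j) n
    rw [← Finset.mul_sum, Finset.sum_add_distrib, hg2]
    gcongr
    linarith
  · exact Finset.prod_nonneg fun j _ => by have := D.t_ge x' y' (s'+j); linarith

theorem ExpPot.one_le_S {f : ℝ → ℝ} (D : ExpPot f) : 1 ≤ D.S := by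
  have hL := D.hL
  have hC := D.hC
  have hθ1 : 2 / D.L < 1 := by rw [div_lt_one (by linarith)]; linarith
  have hθ0 : 0 < 2 / D.L := by positivity
  apply Real.one_le_exp
  apply div_nonneg
  · have : 0 ≤ (1 - 2/D.L)⁻¹ := inv_nonneg.2 (by linarith)
    positivity
  · nlinarith

theorem pair_prod {f : ℝ → ℝ} (D : ExpPot f) {n : ℕ} {a : ℕ → ℤ} {x y : ℕ → ℝ}
    (hx : IsChain' f n a x) (hy : IsChain' f n a y) (h0 : x 0 = y 0) :
    |x (n+1) - y (n+1)| = (∏ j ∈ Finset.range n, D.t x y j) * |x 1 - y 1| := by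
  have hL := D.hL
  have hs1 : |D.σ| = 1 := by
    have : |D.σ| * |D.σ| = 1 := by rw [← abs_mul, D.hσ, abs_one]
    nlinarith [abs_nonneg D.σ]
  have step : ∀ j < n, x (j+2) - y (j+2) = D.σ * D.t x y j * (x (j+1) - y (j+1)) := by
    intro j
    induction j with
    | zero =>
      intro hj
      have e1 := hx.2 0 hj
      have e2 := hy.2 0 hj
      have h3 := D.hf _ _ (hx.1 1 (by omega)) (hy.1 1 (by omega))
      simp only [ExpPot.t, tseq, zero_add] at *
      rw [e1, e2, h0, ← h3]; ring
    | succ j ih =>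
      intro hj
      have ih := ih (by omega)
      have e1 := hx.2 _ hj
      have e2 := hy.2 _ hj
      have h3 := D.hf _ _ (hx.1 (j+1+1) (by omega)) (hy.1 (j+1+1) (by omega))
      have ht := D.t_ge x y j
      have : D.t x y (j+1) = D.b (x (j+1+1)) (y (j+1+1)) - 1 / D.t x y j := rfl
      rw [this]
      have e3 : x (j+1) - y (j+1) = D.σ / D.t x y j * (x (j+2) - y (j+2)) := by
        rw [ih]
        have : D.t x y j ≠ 0 := by linarith
        field_simp
        rw [sq, D.hσ]; ring
      have : x (j+1+2) - y (j+1+2) = (f (x (j+1+1)) - f (y (j+1+1))) - (x (j+1) - y (j+1)) := by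
        rw [e1, e2]; ring
      rw [this, h3, e3]; ring
  have : ∀ k ≤ n, |x (k+1) - y (k+1)| = (∏ j ∈ Finset.range k, D.t x y j) * |x 1 - y 1| := by
    intro k
    induction k with
    | zero => simp
    | succ k ih =>
      intro hk
      rw [step k (by omega), Finset.prod_range_succ, abs_mul, abs_mul, hs1, ih (by omega),
        abs_of_pos (by linarith [D.t_ge x y k])]
      ring
  exact this n le_rfl

noncomputable def ExpPot.K {f : ℝ → ℝ} (D : ExpPot f) (z : ℕ → ℝ) (n : ℕ) : ℝ :=
  ∏ j ∈ Finset.range n, D.t z z j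

theorem ExpPot.K_pos {f : ℝ → ℝ} (D : ExpPot f) (z : ℕ → ℝ) (n : ℕ) : 0 < D.K z n := by
  have hL := D.hL
  exact Finset.prod_pos fun j _ => by linarith [D.t_ge z z j]

theorem chain_upper {f : ℝ → ℝ} (D : ExpPot f) {n : ℕ} {a : ℕ → ℤ} {x y z : ℕ → ℝ}
    (hx : IsChain' f n a x) (hy : IsChain' f n a y) (hz : IsChain' f n a z) (h0 : x 0 = y 0) :
    |x 1 - y 1| ≤ D.S / D.K z n := by
  have h1 := pair_prod D hx hy h0
  have h2 : D.K z n ≤ D.S * ∏ j ∈ Finset.range n, D.t x y j := by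
    have := window_comp D (x := z) (y := z) (x' := x) (y' := y) (n := n) (a := a) 0 0
      (by simpa using hz) (by simpa using hz) (by simpa using hx) (by simpa using hy)
    simpa [ExpPot.K] using this
  have h3 : |x (n+1) - y (n+1)| ≤ 1 := by
    have h1 := hx.1 (n+1) le_rfl
    have h2 := hy.1 (n+1) le_rfl
    rw [abs_lt] at h1 h2
    rw [abs_le]; constructor <;> linarith
  rw [le_div_iff₀ (D.K_pos z n)]
  have hS := D.one_le_S
  calc |x 1 - y 1| * D.K z n ≤ |x 1 - y 1| * (D.S * ∏ j ∈ Finset.range n, D.t x y j) := by gcongr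
    _ = D.S * |x (n+1) - y (n+1)| := by rw [h1]; ring
    _ ≤ D.S := by nlinarith

theorem chain_lower {f : ℝ → ℝ} (D : ExpPot f) {m l : ℕ} {a b : ℕ → ℤ} {x y z w : ℕ → ℝ}
    (hx : IsChain' f (m+l) (fun j => if j < m then a j else b (j - m)) x)
    (hy : IsChain' f (m+l) (fun j => if j < m then a j else b (j - m)) y)
    (hz : IsChain' f m a z) (hw : IsChain' f l b w) (h0 : x 0 = y 0) :
    |x (m+l+1) - y (m+l+1)| ≤ D.S^2 * D.K z m * D.K w l * |x 1 - y 1| := by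
  rw [pair_prod D hx hy h0]
  have r1 : ∀ x, IsChain' f (m+l) (fun j => if j < m then a j else b (j - m)) x → IsChain' f m a (fun j => x (0 + j)) := by
    intro x hx
    refine ⟨fun j hj => by simpa using hx.1 j (by omega), fun j hj => ?_⟩
    have := hx.2 j (by omega)
    simp only [hj, if_true] at this
    simpa using this
  have r2 : ∀ x, IsChain' f (m+l) (fun j => if j < m then a j else b (j - m)) x → IsChain' f l b (fun j => x (m + j)) := by
    intro x hx
    refine ⟨fun j hj => hx.1 (m+j) (by omega), fun j hj => ?_⟩
    have := hx.2 (m+j) (by omega)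
    simpa [add_assoc] using this
  have h1 := window_comp D (x := x) (y := y) (x' := z) (y' := z) (n := m) (a := a) 0 0
      (r1 x hx) (r1 y hy) (by simpa using hz) (by simpa using hz)
  have h2 := window_comp D (x := x) (y := y) (x' := w) (y' := w) (n := l) (a := b) m 0
      (r2 x hx) (r2 y hy) (by simpa using hw) (by simpa using hw)
  simp only [zero_add] at h1 h2
  have hL := D.hL
  have hS := D.one_le_S
  rw [Finset.prod_range_add]
  apply mul_le_mul_of_nonneg_right _ (abs_nonneg _)
  calc _ ≤ (D.S * D.K z m) * (D.S * D.K w l) := by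
        apply mul_le_mul h1 h2
        · exact Finset.prod_nonneg fun j _ => by linarith [D.t_ge x y (m+j)]
        · have := D.K_pos z m; positivity
    _ = _ := by ring

theorem chain_exists {f : ℝ → ℝ} (D : ExpPot f) (n : ℕ) (a : ℕ → ℤ) (s t : ℝ) (hs : |s| < 1/2) (ht : |t| < 1/2) :
    ∃ q, IsChain' f n a q ∧ q 0 = s ∧ q (n+1) = t := by
  have hL := D.hL
  choose φ hφ1 hφ2 using D.surj
  have hs1 : |D.σ| = 1 := by
    have : |D.σ| * |D.σ| = 1 := by rw [← abs_mul, D.hσ, abs_one]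
    nlinarith [abs_nonneg D.σ]
  have hφL : ∀ u v, D.L * |φ u - φ v| ≤ |u - v| := by
    intro u v
    have h := D.hf _ _ (hφ1 u) (hφ1 v)
    rw [hφ2, hφ2] at h
    rw [h, abs_mul, abs_mul, hs1, one_mul]
    have hb := D.hb (φ u) (φ v)
    gcongr
    exact hb.trans (le_abs_self _)
  let ext : (Fin (n+2) → ℝ) → ℕ → ℝ := fun q i => if h : i < n + 2 then q ⟨i, h⟩ else 0
  let Φ : (Fin (n+2) → ℝ) → (Fin (n+2) → ℝ) := fun q j =>
    if (j : ℕ) = 0 then s else if (j : ℕ) = n + 1 then t else φ (ext q (j-1) + ext q (j+1) + a (j-1))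
  have hext : ∀ q q' i, |ext q i - ext q' i| ≤ dist q q' := by
    intro q q' i
    by_cases h : i < n + 2
    · simp only [ext, h, dif_pos]
      rw [← Real.dist_eq]
      exact dist_le_pi_dist q q' _
    · simp [ext, h]
  have hθ0 : 0 ≤ 2 / D.L := by positivity
  have hcon : ContractingWith (Real.toNNReal (2 / D.L)) Φ := by
    constructor
    · rw [Real.toNNReal_lt_one]
      rw [div_lt_one (by linarith)]; exact hL
    · apply LipschitzWith.of_dist_le_mul
      intro q q'
      rw [Real.coe_toNNReal _ hθ0]
      rw [dist_pi_le_iff (by positivity)]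
      intro j
      by_cases h0 : (j : ℕ) = 0
      · simp only [Φ, h0, if_true, dist_self]; positivity
      by_cases h1 : (j : ℕ) = n + 1
      · simp only [Φ, h1]; simp; positivity
      simp only [Φ, h0, h1, if_false]
      rw [Real.dist_eq]
      have k1 := hφL (ext q (j-1) + ext q (j+1) + a (j-1)) (ext q' (j-1) + ext q' (j+1) + a (j-1))
      have k2 := hext q q' (j-1)
      have k3 := hext q q' (j+1)
      have k4 : |ext q (j-1) + ext q (j+1) + a (j-1) - (ext q' (j-1) + ext q' (j+1) + a (j-1))| ≤ 2 * dist q q' := by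
        have : ext q (j-1) + ext q (j+1) + a (j-1) - (ext q' (j-1) + ext q' (j+1) + a (j-1)) = (ext q (j-1) - ext q' (j-1)) + (ext q (j+1) - ext q' (j+1)) := by ring
        rw [this]
        exact (abs_add_le _ _).trans (by linarith)
      rw [div_mul_eq_mul_div, le_div_iff₀ (by linarith)]
      linarith
  set q0 := ContractingWith.fixedPoint Φ hcon with hq0
  have hfix : Φ q0 = q0 := hcon.fixedPoint_isFixedPt
  have hval : ∀ j (hj : j < n + 2), ext q0 j = Φ q0 ⟨j, hj⟩ := by
    intro j hj
    rw [hfix]; simp [ext, hj]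
  have v0 : ext q0 0 = s := by rw [hval 0 (by omega)]; simp [Φ]
  have v1 : ext q0 (n+1) = t := by rw [hval (n+1) (by omega)]; simp [Φ]
  have v2 : ∀ j < n, ext q0 (j+1) = φ (ext q0 j + ext q0 (j+2) + a j) := by
    intro j hj
    rw [hval (j+1) (by omega)]
    have : j ≠ n := by omega
    simp only [Φ]
    rw [if_neg (by omega), if_neg (by omega)]
    rfl
  refine ⟨ext q0, ⟨fun j hj => ?_, fun j hj => ?_⟩, v0, v1⟩
  · rcases j with _ | j
    · rw [v0]; exact hs
    · by_cases h : j = n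
      · rw [h, v1]; exact ht
      · rw [v2 j (by omega)]; exact hφ1 _
  · rw [v2 j hj, hφ2]; ring

noncomputable def avgA (X Y : ℝ) : ℝ := ∫ t in (0:ℝ)..1, 1 / (1 + (X + t * (Y - X))^2)

theorem avgA_cont (X Y : ℝ) : Continuous (fun t : ℝ => 1 / (1 + (X + t * (Y - X))^2)) := by
  apply Continuous.div continuous_const (by fun_prop)
  intro t; positivity

theorem avgA_ftc (X Y : ℝ) : arctan Y - arctan X = (Y - X) * avgA X Y := by
  have h : ∀ t ∈ Set.uIcc (0:ℝ) 1, HasDerivAt (fun t : ℝ => arctan (X + t * (Y - X)))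
      ((Y - X) * (1 / (1 + (X + t * (Y - X))^2))) t := by
    intro t _
    have h1 : HasDerivAt (fun t : ℝ => X + t * (Y - X)) (Y - X) t := by
      simpa using ((hasDerivAt_id t).mul_const (Y - X)).const_add X
    have := h1.arctan
    convert this using 1
    ring
  have := intervalIntegral.integral_eq_sub_of_hasDerivAt h
    (((continuous_const.mul (avgA_cont X Y))).intervalIntegrable _ _)
  rw [intervalIntegral.integral_const_mul] at this
  simp only [one_mul, zero_mul, add_zero, add_sub_cancel] at this
  rw [avgA, this]

theorem avgA_le_one (X Y : ℝ) : avgA X Y ≤ 1 := by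
  have : avgA X Y ≤ ∫ t in (0:ℝ)..1, (1:ℝ) := by
    apply intervalIntegral.integral_mono_on (by norm_num) ((avgA_cont X Y).intervalIntegrable _ _)
      (continuous_const.intervalIntegrable _ _)
    intro t _
    rw [div_le_one (by positivity)]
    nlinarith [sq_nonneg (X + t * (Y - X))]
  simpa using this

theorem avgA_pos (X Y : ℝ) : 0 < avgA X Y := by
  apply intervalIntegral.intervalIntegral_pos_of_pos ((avgA_cont X Y).intervalIntegrable _ _) _ (by norm_num)
  intro t; positivity

theorem avgA_comp (X Y X' Y' η : ℝ) (hη : 0 ≤ η) (hX : |X - X'| ≤ η) (hY : |Y - Y'| ≤ η) :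
    avgA X' Y' ≤ (1 + η)^2 * avgA X Y := by
  rw [avgA, avgA, ← intervalIntegral.integral_const_mul]
  apply intervalIntegral.integral_mono_on (by norm_num) ((avgA_cont X' Y').intervalIntegrable _ _)
      ((continuous_const.mul (avgA_cont X Y)).intervalIntegrable _ _)
  intro t ht
  set u := X + t * (Y - X) with hu
  set u' := X' + t * (Y' - X') with hu'
  have hd : |u - u'| ≤ η := by
    have : u - u' = (1 - t) * (X - X') + t * (Y - Y') := by rw [hu, hu']; ring
    rw [this]
    refine (abs_add_le _ _).trans ?_
    rw [abs_mul, abs_mul, abs_of_nonneg ht.1, abs_of_nonneg (by linarith [ht.2] : 0 ≤ 1 - t)]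
    nlinarith [ht.1, ht.2]
  have h1 : |u| ≤ |u'| + η := by
    have := abs_sub_abs_le_abs_sub u u'
    linarith
  have h2 : 1 + u^2 ≤ (1 + η)^2 * (1 + u'^2) := by
    have e1 : u^2 = |u|^2 := (sq_abs u).symm
    have e2 : u'^2 = |u'|^2 := (sq_abs u').symm
    rw [e1, e2]
    have a1 := abs_nonneg u
    have a2 := abs_nonneg u'
    have : |u|^2 ≤ (|u'| + η)^2 := by gcongr
    nlinarith [mul_nonneg hη (sq_nonneg (|u'| - 1)), mul_nonneg (mul_nonneg hη hη) (sq_nonneg |u'|), mul_nonneg hη (sq_nonneg (|u'|))]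
  show 1 / (1 + u'^2) ≤ (1 + η)^2 * (1 / (1 + u^2))
  rw [mul_one_div, div_le_div_iff₀ (by positivity) (by positivity)]
  linarith

noncomputable def ff (ε : ℝ) : ℝ → ℝ := fun q => 2 * q - 2 * ε * Real.tan (Real.pi * q)

theorem arctan_tan_pi (x : ℝ) (hx : |x| < 1/2) : arctan (tan (π * x)) = π * x := by
  rw [abs_lt] at hx
  have := Real.pi_pos
  apply arctan_tan <;> nlinarith

theorem ff_sub (ε x y : ℝ) (hx : |x| < 1/2) (hy : |y| < 1/2) :
    ff ε x - ff ε y = (2 - 2 * ε * π / avgA (tan (π * x)) (tan (π * y))) * (x - y) := by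
  have h := avgA_ftc (tan (π * x)) (tan (π * y))
  rw [arctan_tan_pi x hx, arctan_tan_pi y hy] at h
  have hp := avgA_pos (tan (π * x)) (tan (π * y))
  have : tan (π * x) - tan (π * y) = π * (x - y) / avgA (tan (π * x)) (tan (π * y)) := by
    rw [eq_div_iff hp.ne']; linarith
  have e : ff ε x - ff ε y = 2 * (x - y) - 2 * ε * (tan (π * x) - tan (π * y)) := by
    simp only [ff]; ring
  rw [e, this]; ring

theorem ff_surj (ε : ℝ) (hε : ε ≠ 0) (v : ℝ) : ∃ x, |x| < 1/2 ∧ ff ε x = v := by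
  let g : ℝ → ℝ := fun X => (2/π) * arctan X - 2 * ε * X
  have hgc : Continuous g := by
    have := Real.continuous_arctan
    fun_prop
  have hpi := Real.pi_pos
  have hlo : ∀ X, -1 - 2 * ε * X ≤ g X := by
    intro X
    have := (neg_pi_div_two_lt_arctan X).le
    have h2 : (2/π) * (-(π/2)) ≤ (2/π) * arctan X := by gcongr
    have h3 : (2/π) * (-(π/2)) = -1 := by field_simp
    simp only [g]; linarith
  have hhi : ∀ X, g X ≤ 1 - 2 * ε * X := by
    intro X
    have := (arctan_lt_pi_div_two X).le
    have h2 : (2/π) * arctan X ≤ (2/π) * (π/2) := by gcongr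
    have h3 : (2/π) * (π/2) = 1 := by field_simp
    simp only [g]; linarith
  have hsurj : ∃ X, g X = v := by
    have h1 : g ((v - 1)/(-2*ε)) ≤ v := by
      refine (hhi _).trans (le_of_eq ?_); field_simp; ring
    have h2 : v ≤ g ((v + 1)/(-2*ε)) := by
      refine le_trans (le_of_eq ?_) (hlo _); field_simp; ring
    exact mem_range_of_exists_le_of_exists_ge hgc ⟨_, h1⟩ ⟨_, h2⟩
  obtain ⟨X, hX⟩ := hsurj
  refine ⟨arctan X / π, ?_, ?_⟩
  · rw [abs_lt]
    have h1 := neg_pi_div_two_lt_arctan X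
    have h2 := arctan_lt_pi_div_two X
    constructor
    · rw [lt_div_iff₀ hpi]; linarith
    · rw [div_lt_iff₀ hpi]; linarith
  · rw [← hX]
    simp only [ff, g]
    rw [mul_div_cancel₀ _ hpi.ne', tan_arctan]; ring

theorem expPot_exists (ε : ℝ) (hε : ε < 0 ∨ 2 / π < ε) : Nonempty (ExpPot (ff ε)) := by
  have hpi := Real.pi_pos
  have hε0 : ε ≠ 0 := by
    rcases hε with h | h
    · exact h.ne
    · have : 0 < 2 / π := by positivity
      exact (this.trans h).ne'
  have habs : 0 < |ε| := abs_pos.mpr hε0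
  set M : ℝ := 3 / (2 * |ε|) with hM
  have hM0 : 0 ≤ M := by positivity
  have hXX : ∀ x x' η, |x - x'| ≤ η → |ff ε x - ff ε x'| ≤ η → |tan (π * x) - tan (π * x')| ≤ M * η := by
    intro x x' η h1 h2
    have e : 2 * ε * (tan (π * x) - tan (π * x')) = 2 * (x - x') - (ff ε x - ff ε x') := by
      simp only [ff]; ring
    have e2 : 2 * |ε| * |tan (π * x) - tan (π * x')| = |2 * (x - x') - (ff ε x - ff ε x')| := by
      rw [← e, abs_mul, abs_mul]; simp
    have e3 : |2 * (x - x') - (ff ε x - ff ε x')| ≤ 2 * η + η := by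
      refine (abs_sub _ _).trans ?_
      rw [abs_mul]; simp only [Nat.abs_ofNat]; linarith
    rw [hM, div_mul_eq_mul_div, le_div_iff₀ (by positivity)]
    linarith
  set C : ℝ := 2 * (2 * M + 2 * M^2) with hC
  have hC0 : 0 ≤ C := by positivity
  have hA : ∀ x y x' y' η, 0 ≤ η → η ≤ 2 →
    |x - x'| ≤ η → |y - y'| ≤ η → |ff ε x - ff ε x'| ≤ η → |ff ε y - ff ε y'| ≤ η →
      1 / avgA (tan (π * x)) (tan (π * y)) ≤ (1 + C/2 * η) * (1 / avgA (tan (π * x')) (tan (π * y'))) := by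
    intro x y x' y' η h0 h2 hx hy hfx hfy
    have k := avgA_comp _ _ _ _ (M * η) (by positivity) (hXX _ _ _ hx hfx) (hXX _ _ _ hy hfy)
    have p1 := avgA_pos (tan (π * x)) (tan (π * y))
    have p2 := avgA_pos (tan (π * x')) (tan (π * y'))
    have k2 : (1 + M * η)^2 ≤ 1 + C/2 * η := by
      rw [hC]; nlinarith [mul_nonneg (mul_nonneg hM0 hM0) (mul_nonneg h0 (sub_nonneg.mpr h2))]
    rw [mul_one_div, div_le_div_iff₀ p1 p2]
    nlinarith
  have hA1 : ∀ x y, 1 ≤ 1 / avgA (tan (π * x)) (tan (π * y)) := by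
    intro x y
    rw [le_div_iff₀ (avgA_pos _ _)]
    linarith [avgA_le_one (tan (π * x)) (tan (π * y))]
  rcases hε with h | h
  · refine ⟨⟨fun x y => 2 - 2 * ε * π / avgA (tan (π * x)) (tan (π * y)), 1, 2 - 2 * ε * π, C, by norm_num, ?_, hC0, ?_, ?_, ?_, ff_surj ε hε0⟩⟩
    · nlinarith
    · intro x y
      have := hA1 x y
      rw [div_eq_mul_one_div (2 * ε * π)]
      nlinarith [mul_pos (neg_pos.mpr h) hpi]
    · intro x y hx hy
      rw [ff_sub ε x y hx hy]; ring
    · intro x y x' y' η _ _ _ _ h0 h2 hx hy hfx hfy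
      have k := hA x y x' y' η h0 h2 hx hy hfx hfy
      have k1 := hA1 x' y'
      rw [div_eq_mul_one_div (2 * ε * π), div_eq_mul_one_div (2 * ε * π)]
      set w := 1 / avgA (tan (π * x)) (tan (π * y))
      set w' := 1 / avgA (tan (π * x')) (tan (π * y'))
      have hn : 0 < -(2 * ε * π) := by nlinarith [mul_pos (neg_pos.mpr h) hpi]
      have := mul_le_mul_of_nonneg_left k hn.le
      nlinarith [mul_nonneg hC0 h0, mul_nonneg (mul_nonneg hC0 h0) (mul_nonneg hn.le (by linarith : 0 ≤ w'))]
  · have h4 : 2 < ε * π := by rwa [div_lt_iff₀ hpi] at h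
    refine ⟨⟨fun x y => 2 * ε * π / avgA (tan (π * x)) (tan (π * y)) - 2, -1, 2 * ε * π - 2, C, by norm_num, ?_, hC0, ?_, ?_, ?_, ff_surj ε hε0⟩⟩
    · linarith
    · intro x y
      have := hA1 x y
      rw [div_eq_mul_one_div (2 * ε * π)]
      nlinarith
    · intro x y hx hy
      rw [ff_sub ε x y hx hy]; ring
    · intro x y x' y' η _ _ _ _ h0 h2 hx hy hfx hfy
      have k := hA x y x' y' η h0 h2 hx hy hfx hfy
      have k1 := hA1 x' y'
      rw [div_eq_mul_one_div (2 * ε * π), div_eq_mul_one_div (2 * ε * π)]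
      set w := 1 / avgA (tan (π * x)) (tan (π * y))
      set w' := 1 / avgA (tan (π * x')) (tan (π * y'))
      have k2 := mul_le_mul_of_nonneg_left k (by linarith : 0 ≤ 2 * ε * π)
      have k3 : 4 ≤ 2 * ε * π * w' := by nlinarith
      have k4 := mul_le_mul_of_nonneg_left k3 (mul_nonneg hC0 h0)
      nlinarith

noncomputable def nuI : Measure ℝ := volume.restrict (Set.Ico (-(1:ℝ)/2) (1/2))

theorem unifSq_eq : unifSq = nuI.prod nuI := by
  rw [unifSq, unitSq, nuI, Measure.prod_restrict]; rfl

theorem nuI_prob : IsProbabilityMeasure nuI := by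
  constructor
  rw [nuI, Measure.restrict_apply_univ, Real.volume_Ico]
  norm_num

theorem nuI_sfin : SFinite nuI := by
  have := nuI_prob
  infer_instance

theorem unifSq_prob : IsProbabilityMeasure unifSq := by
  have := nuI_prob
  rw [unifSq_eq]; infer_instance

theorem rmod_meas : Measurable rmod := by
  have h : Measurable (fun x : ℝ => ((⌊x + 1/2⌋ : ℤ) : ℝ)) := by
    have : Measurable (fun x : ℝ => ⌊x + 1/2⌋) := Int.measurable_floor.comp (measurable_id.add_const _)
    exact measurable_from_top.comp this
  exact measurable_id.sub h

theorem tan_meas : Measurable Real.tan := by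
  have : Real.tan = fun x => Real.sin x / Real.cos x := by
    funext x; exact Real.tan_eq_sin_div_cos x
  rw [this]
  exact Real.measurable_sin.div Real.measurable_cos

theorem ff_meas (ε : ℝ) : Measurable (ff ε) := by
  have := tan_meas
  have h2 : Measurable (fun q : ℝ => Real.tan (π * q)) := this.comp (measurable_id.const_mul _)
  exact (measurable_id.const_mul _).sub (h2.const_mul _)

noncomputable def kap (ε : ℝ) (x : ℝ × ℝ) : ℤ := ⌊ff ε x.2 - x.1 + 1/2⌋

theorem kap_meas (ε : ℝ) : Measurable (kap ε) := by
  have := ff_meas ε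
  exact Int.measurable_floor.comp (((this.comp measurable_snd).sub measurable_fst).add_const _)

theorem rmod_add_int (x : ℝ) (n : ℤ) : rmod (x + n) = rmod x := by
  simp only [rmod]
  have : x + n + 1/2 = x + 1/2 + n := by ring
  rw [this, Int.floor_add_intCast]; push_cast; ring

theorem rmod_eq_self (x : ℝ) (hx : x ∈ Set.Ico (-(1:ℝ)/2) (1/2)) : rmod x = x := by
  have : ⌊x + 1/2⌋ = 0 := by
    rw [Int.floor_eq_iff]; push_cast
    exact ⟨by linarith [hx.1], by linarith [hx.2]⟩
  rw [rmod, this]; simp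

theorem Ttilde_eq (ε : ℝ) (x : ℝ × ℝ) : Ttilde ε x = (rmod x.2, rmod (ff ε x.2 - x.1)) := by
  simp only [Ttilde, ff]
  congr 2; ring

theorem Ttilde_meas (ε : ℝ) : Measurable (Ttilde ε) := by
  have h : Ttilde ε = fun x => (rmod x.2, rmod (ff ε x.2 - x.1)) := funext (Ttilde_eq ε)
  rw [h]
  have := ff_meas ε
  exact (rmod_meas.comp measurable_snd).prodMk (rmod_meas.comp ((this.comp measurable_snd).sub measurable_fst))

theorem rmod_sub_mp (c : ℝ) : MeasurePreserving (fun p => rmod (c - p)) nuI nuI := by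
  have hm : Measurable (fun p => rmod (c - p)) := rmod_meas.comp (measurable_const.sub measurable_id)
  refine ⟨hm, ?_⟩
  ext s hs
  rw [Measure.map_apply hm hs]
  rw [nuI, Measure.restrict_apply (hm hs), Measure.restrict_apply hs]
  set P : Set ℝ := rmod ⁻¹' s with hP
  have hPm : MeasurableSet P := rmod_meas hs
  have e1 : s ∩ Set.Ico (-(1:ℝ)/2) (1/2) = P ∩ Set.Ico (-(1:ℝ)/2) (1/2) := by
    ext x
    constructor
    · rintro ⟨h1, h2⟩; refine ⟨?_, h2⟩; rw [hP, Set.mem_preimage, rmod_eq_self x h2]; exact h1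
    · rintro ⟨h1, h2⟩; refine ⟨?_, h2⟩; rw [hP, Set.mem_preimage, rmod_eq_self x h2] at h1; exact h1
  have e2 : (fun p => rmod (c - p)) ⁻¹' s ∩ Set.Ico (-(1:ℝ)/2) (1/2) =
      (fun p => c - p) ⁻¹' (P ∩ Set.Ioc (c - 1/2) (c - 1/2 + 1)) := by
    ext x
    simp only [Set.mem_inter_iff, Set.mem_preimage, Set.mem_Ico, Set.mem_Ioc, hP]
    constructor
    · rintro ⟨h1, h2, h3⟩; exact ⟨h1, by linarith, by linarith⟩
    · rintro ⟨h1, h2, h3⟩; exact ⟨h1, by linarith, by linarith⟩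
  rw [e1, e2, (Measure.measurePreserving_sub_left volume c).measure_preimage
    (hPm.inter measurableSet_Ioc).nullMeasurableSet]
  have e3 : volume (P ∩ Set.Ico (-(1:ℝ)/2) (1/2)) = volume (P ∩ Set.Ioc (-(1:ℝ)/2) (-(1:ℝ)/2 + 1)) := by
    have : -(1:ℝ)/2 + 1 = 1/2 := by norm_num
    rw [this]
    exact measure_congr ((ae_eq_refl P).inter Ico_ae_eq_Ioc)
  rw [e3]
  apply (isAddFundamentalDomain_Ioc one_pos (c - 1/2) volume).measure_set_eq
    (isAddFundamentalDomain_Ioc one_pos (-(1:ℝ)/2) volume) hPm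
  rintro ⟨g, hg⟩
  obtain ⟨n, rfl⟩ := AddSubgroup.mem_zmultiples_iff.mp hg
  ext x
  simp only [Set.mem_preimage, hP]
  have : (⟨n • (1:ℝ), hg⟩ : AddSubgroup.zmultiples (1:ℝ)) +ᵥ x = x + n := by
    rw [AddSubgroup.vadd_def]; simp [add_comm]
  rw [this, rmod_add_int]

theorem rmod_mp : MeasurePreserving rmod nuI nuI := by
  refine ⟨rmod_meas, ?_⟩
  have : rmod =ᵐ[nuI] id := by
    rw [nuI]
    filter_upwards [ae_restrict_mem measurableSet_Ico] with x hx
    exact rmod_eq_self x hx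
  rw [Measure.map_congr this, Measure.map_id]

theorem Ttilde_mp (ε : ℝ) : MeasurePreserving (Ttilde ε) unifSq unifSq := by
  have := nuI_prob
  have hff := ff_meas ε
  have h1 : MeasurePreserving (fun y : ℝ × ℝ => (rmod y.1, rmod (ff ε y.1 - y.2))) (nuI.prod nuI) (nuI.prod nuI) := by
    refine MeasurePreserving.skew_product (g := fun q p => rmod (ff ε q - p)) rmod_mp ?_ ?_
    · exact rmod_meas.comp ((hff.comp measurable_fst).sub measurable_snd)
    · exact ae_of_all _ fun a => (rmod_sub_mp _).map_eq
  have h2 := h1.comp (Measure.measurePreserving_swap (μ := nuI) (ν := nuI))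
  rw [unifSq_eq]
  convert h2 using 1
  funext x
  rw [Ttilde_eq]; rfl

def Good (ε : ℝ) : Set (ℝ × ℝ) := {x | ∀ j, |((Ttilde ε)^[j] x).1| < 1/2 ∧ |((Ttilde ε)^[j] x).2| < 1/2}

theorem Good_meas (ε : ℝ) : MeasurableSet (Good ε) := by
  have : Good ε = ⋂ j, (Ttilde ε)^[j] ⁻¹' ({y : ℝ × ℝ | |y.1| < 1/2} ∩ {y : ℝ × ℝ | |y.2| < 1/2}) := by
    ext x; simp [Good]
  rw [this]
  refine MeasurableSet.iInter fun j => ((Ttilde_meas ε).iterate j) ?_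
  exact (measurableSet_lt (measurable_fst.abs) measurable_const).inter
    (measurableSet_lt (measurable_snd.abs) measurable_const)

theorem nuI_ae : ∀ᵐ x ∂nuI, |x| < 1/2 := by
  have : nuI = volume.restrict (Set.Ioo (-(1:ℝ)/2) (1/2)) := by
    rw [nuI]; exact (Measure.restrict_congr_set Ioo_ae_eq_Ico).symm
  rw [this]
  filter_upwards [ae_restrict_mem measurableSet_Ioo] with x hx
  rw [abs_lt]; exact ⟨by linarith [hx.1], hx.2⟩

theorem Good_ae (ε : ℝ) : ∀ᵐ x ∂unifSq, x ∈ Good ε := by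
  have := nuI_prob
  have h : ∀ᵐ y ∂unifSq, |y.1| < 1/2 ∧ |y.2| < 1/2 := by
    rw [unifSq_eq]
    have h1 := Measure.quasiMeasurePreserving_fst (μ := nuI) (ν := nuI) |>.ae nuI_ae
    have h2 := Measure.quasiMeasurePreserving_snd (μ := nuI) (ν := nuI) |>.ae nuI_ae
    filter_upwards [h1, h2] with x a b using ⟨a, b⟩
  have h3 : ∀ j, ∀ᵐ x ∂unifSq, |((Ttilde ε)^[j] x).1| < 1/2 ∧ |((Ttilde ε)^[j] x).2| < 1/2 :=
    fun j => ((Ttilde_mp ε).iterate j).quasiMeasurePreserving.ae h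
  exact ae_all_iff.mpr h3

theorem abs_mem_Ico (x : ℝ) (hx : |x| < 1/2) : x ∈ Set.Ico (-(1:ℝ)/2) (1/2) := by
  rw [abs_lt] at hx; exact ⟨by linarith [hx.1], hx.2⟩

theorem good_snd (ε : ℝ) (x : ℝ × ℝ) (hx : x ∈ Good ε) (j : ℕ) :
    ((Ttilde ε)^[j] x).2 = ((Ttilde ε)^[j+1] x).1 := by
  rw [Function.iterate_succ_apply', Ttilde_eq]
  exact (rmod_eq_self _ (abs_mem_Ico _ (hx j).2)).symm

theorem good_chain (ε : ℝ) (x : ℝ × ℝ) (hx : x ∈ Good ε) (n : ℕ) (a : ℕ → ℤ)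
    (ha : ∀ j < n, kap ε ((Ttilde ε)^[j] x) = a j) :
    IsChain' (ff ε) n a (fun j => ((Ttilde ε)^[j] x).1) := by
  refine ⟨fun j _ => (hx j).1, fun j hj => ?_⟩
  simp only
  rw [← good_snd ε x hx (j+1), ← good_snd ε x hx j, ← ha j hj, Function.iterate_succ_apply', Ttilde_eq]
  rfl

theorem chain_orbit (ε : ℝ) (n : ℕ) (a : ℕ → ℤ) (q : ℕ → ℝ) (hq : IsChain' (ff ε) n a q) :
    (∀ j ≤ n, (Ttilde ε)^[j] (q 0, q 1) = (q j, q (j+1))) ∧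
    ∀ j < n, kap ε ((Ttilde ε)^[j] (q 0, q 1)) = a j := by
  have h1 : ∀ j ≤ n, (Ttilde ε)^[j] (q 0, q 1) = (q j, q (j+1)) := by
    intro j
    induction j with
    | zero => intro _; rfl
    | succ j ih =>
      intro hj
      rw [Function.iterate_succ_apply', ih (by omega), Ttilde_eq]
      have e : ff ε (q (j+1)) - q j = q (j+2) + a j := by
        rw [hq.2 j (by omega)]; ring
      simp only [e, rmod_add_int]
      rw [rmod_eq_self _ (abs_mem_Ico _ (hq.1 _ (by omega))), rmod_eq_self _ (abs_mem_Ico _ (hq.1 _ (by omega)))]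
  refine ⟨h1, fun j hj => ?_⟩
  rw [h1 j hj.le]
  have e : ff ε (q (j+1)) - q j + 1/2 = q (j+2) + 1/2 + a j := by
    rw [hq.2 j (by omega)]; ring
  simp only [kap]
  rw [e, Int.floor_add_intCast]
  have := abs_mem_Ico _ (hq.1 (j+2) (by omega))
  have : ⌊q (j+2) + 1/2⌋ = 0 := by
    rw [Int.floor_eq_iff]; push_cast
    exact ⟨by linarith [this.1], by linarith [this.2]⟩
  rw [this, zero_add]

def extw {m : ℕ} (a : Fin m → ℤ) : ℕ → ℤ := fun j => if h : j < m then a ⟨j, h⟩ else 0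

theorem pword_meas' (ε : ℝ) (m : ℕ) : Measurable (pword (Ttilde ε) (kap ε) m) :=
  measurable_pi_lambda _ fun j => (kap_meas ε).comp ((Ttilde_meas ε).iterate j)

theorem good_word_chain (ε : ℝ) (m : ℕ) (a : Fin m → ℤ) (x : ℝ × ℝ) (hx : x ∈ Good ε)
    (ha : pword (Ttilde ε) (kap ε) m x = a) :
    IsChain' (ff ε) m (extw a) (fun j => ((Ttilde ε)^[j] x).1) := by
  apply good_chain ε x hx
  intro j hj
  rw [extw, dif_pos hj, ← ha]; rfl

theorem cyl_upper (ε : ℝ) (D : ExpPot (ff ε)) (m : ℕ) (a : Fin m → ℤ) (z : ℕ → ℝ)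
    (hz : IsChain' (ff ε) m (extw a) z) :
    unifSq {x | pword (Ttilde ε) (kap ε) m x = a} ≤ ENNReal.ofReal (D.S / D.K z m) := by
  have := nuI_prob
  set E := {x | pword (Ttilde ε) (kap ε) m x = a} with hE
  have hEm : MeasurableSet E := pword_meas' ε m (measurableSet_singleton a)
  have h1 : unifSq E = unifSq (E ∩ Good ε) := by
    refine (measure_inter_conull ?_).symm
    have := Good_ae ε
    rw [ae_iff] at this
    exact measure_mono_null (fun x hx => hx) this
  rw [h1, unifSq_eq, Measure.prod_apply (hEm.inter (Good_meas ε))]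
  calc ∫⁻ p, nuI (Prod.mk p ⁻¹' (E ∩ Good ε)) ∂nuI ≤ ∫⁻ p, ENNReal.ofReal (D.S / D.K z m) ∂nuI := by
        apply lintegral_mono
        intro p
        refine (Measure.restrict_apply_le _ _).trans ((Real.volume_le_diam _).trans (Metric.ediam_le ?_))
        intro u hu v hv
        have c1 := good_word_chain ε m a (p, u) hu.2 hu.1
        have c2 := good_word_chain ε m a (p, v) hv.2 hv.1
        have := chain_upper D c1 c2 hz rfl
        simp only [Function.iterate_one] at this
        rw [edist_dist]
        apply ENNReal.ofReal_le_ofReal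
        rw [Real.dist_eq]
        have e1 := good_snd ε _ hu.2 0
        have e2 := good_snd ε _ hv.2 0
        simp only [zero_add, Function.iterate_one, Function.iterate_zero, id] at e1 e2
        rw [e1, e2]; exact this
    _ = _ := by simp

theorem cyl_lower (ε : ℝ) (D : ExpPot (ff ε)) (m l : ℕ) (a : Fin m → ℤ) (b : Fin l → ℤ) (z w : ℕ → ℝ)
    (hz : IsChain' (ff ε) m (extw a) z) (hw : IsChain' (ff ε) l (extw b) w) :
    ENNReal.ofReal (1 / (D.S^2 * D.K z m * D.K w l)) ≤
    unifSq {x | pword (Ttilde ε) (kap ε) m x = a ∧ pword (Ttilde ε) (kap ε) l ((Ttilde ε)^[m] x) = b} := by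
  have := nuI_prob
  set E := {x | pword (Ttilde ε) (kap ε) m x = a ∧ pword (Ttilde ε) (kap ε) l ((Ttilde ε)^[m] x) = b} with hE
  have hEm : MeasurableSet E := (pword_meas' ε m (measurableSet_singleton a)).inter
    (((pword_meas' ε l).comp ((Ttilde_meas ε).iterate m)) (measurableSet_singleton b))
  have hS : 1 ≤ D.S := D.one_le_S
  have hK1 := D.K_pos z m
  have hK2 := D.K_pos w l
  set R := D.S^2 * D.K z m * D.K w l with hR
  have hRpos : 0 < R := by positivity
  rw [unifSq_eq, Measure.prod_apply hEm]
  have hslice : ∀ s, |s| < 1/2 → ENNReal.ofReal (1 / R) ≤ nuI (Prod.mk s ⁻¹' E) := by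
    intro s hs
    set ab : ℕ → ℤ := fun j => if j < m then extw a j else extw b (j - m) with hab
    set F : Set ℝ := {u | ∃ q, IsChain' (ff ε) (m + l) ab q ∧ q 0 = s ∧ q 1 = u} with hF
    have hFE : F ⊆ Prod.mk s ⁻¹' E ∩ Set.Ico (-(1:ℝ)/2) (1/2) := by
      rintro u ⟨q, hq, q0, q1⟩
      refine ⟨?_, ?_⟩
      · have ho := (chain_orbit ε _ _ _ hq).2
        rw [q0, q1] at ho
        refine ⟨?_, ?_⟩
        · funext j
          have := ho j (by omega)
          simp only [pword]
          rw [this]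
          simp [hab, extw]
        · funext j
          have := ho (j + m) (by omega)
          simp only [pword]
          rw [← Function.iterate_add_apply, this]
          simp [hab, extw]
      · rw [← q1]; exact abs_mem_Ico _ (hq.1 1 (by omega))
    set Ψ : ℝ → ℝ := fun u => ((Ttilde ε)^[m + l] (s, u)).2 with hΨ
    have hΨq : ∀ q, IsChain' (ff ε) (m + l) ab q → q 0 = s → Ψ (q 1) = q (m + l + 1) := by
      intro q hq q0
      have := (chain_orbit ε _ _ _ hq).1 (m + l) le_rfl
      rw [q0] at this
      simp only [hΨ, this]
    have hlip : LipschitzOnWith (Real.toNNReal R) Ψ F := by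
      apply LipschitzOnWith.of_dist_le_mul
      rintro u ⟨x, hx, x0, rfl⟩ v ⟨y, hy, y0, rfl⟩
      rw [hΨq x hx x0, hΨq y hy y0, Real.coe_toNNReal _ hRpos.le, Real.dist_eq, Real.dist_eq]
      exact chain_lower D hx hy hz hw (x0.trans y0.symm)
    have himg : Set.Ioo (-(1:ℝ)/2) (1/2) ⊆ Ψ '' F := by
      intro t ht
      obtain ⟨q, hq, q0, q1⟩ := chain_exists D (m + l) ab s t hs (by rw [abs_lt]; exact ⟨by linarith [ht.1], ht.2⟩)
      exact ⟨q 1, ⟨q, hq, q0, rfl⟩, by rw [hΨq q hq q0, q1]⟩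
    have hmeas := hlip.hausdorffMeasure_image_le (d := 1) zero_le_one
    rw [hausdorffMeasure_real, ENNReal.rpow_one] at hmeas
    have h1 : (1 : ENNReal) ≤ volume (Ψ '' F) := by
      refine le_trans (le_of_eq ?_) (measure_mono himg)
      rw [Real.volume_Ioo]; norm_num
    have h2 : volume F ≤ nuI (Prod.mk s ⁻¹' E) := by
      rw [nuI, Measure.restrict_apply' measurableSet_Ico]
      exact measure_mono hFE
    refine le_trans ?_ h2
    calc ENNReal.ofReal (1 / R) = ENNReal.ofReal (1 / R) * 1 := (mul_one _).symm
      _ ≤ ENNReal.ofReal (1 / R) * (ENNReal.ofReal R * volume F) := by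
          gcongr; exact h1.trans hmeas
      _ = volume F := by
          rw [← mul_assoc, ← ENNReal.ofReal_mul (by positivity), one_div_mul_cancel hRpos.ne']
          simp
  calc ENNReal.ofReal (1 / R) = ∫⁻ p, ENNReal.ofReal (1 / R) ∂nuI := by simp
    _ ≤ _ := by
      apply lintegral_mono_ae
      filter_upwards [nuI_ae] with s hs using hslice s hs

theorem stmt_happ (ε : ℝ) (D : ExpPot (ff ε)) (g : BoundedContinuousFunction (ℝ × ℝ) ℝ) (δ : ℝ) (hδ : 0 < δ) :
    ∃ m l, ∃ φ : (Fin l → ℤ) → ℝ, ∀ᵐ x ∂unifSq,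
      |g ((Ttilde ε)^[m] x) - φ (pword (Ttilde ε) (kap ε) l x)| ≤ δ := by
  classical
  have hL := D.hL
  have hθ1 : 2 / D.L < 1 := by rw [div_lt_one (by linarith)]; exact hL
  have hθ0 : 0 ≤ 2 / D.L := by positivity
  have hcpt : IsCompact (Set.Icc (-(1:ℝ)/2) (1/2) ×ˢ Set.Icc (-(1:ℝ)/2) (1/2)) := isCompact_Icc.prod isCompact_Icc
  have huc := hcpt.uniformContinuousOn_of_continuous (g.continuous.continuousOn)
  rw [Metric.uniformContinuousOn_iff] at huc
  obtain ⟨r, hr, hur⟩ := huc δ hδ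
  obtain ⟨m, hm⟩ := exists_pow_lt_of_lt_one hr hθ1
  refine ⟨m, 2 * m, fun w => if h : ∃ y ∈ Good ε, pword (Ttilde ε) (kap ε) (2*m) y = w then
    g ((Ttilde ε)^[m] h.choose) else 0, ?_⟩
  filter_upwards [Good_ae ε] with x hx
  have h : ∃ y ∈ Good ε, pword (Ttilde ε) (kap ε) (2*m) y = pword (Ttilde ε) (kap ε) (2*m) x := ⟨x, hx, rfl⟩
  rw [dif_pos h]
  have hy := h.choose_spec
  set y := h.choose
  have c1 := good_word_chain ε (2*m) _ x hx rfl
  have c2 := good_word_chain ε (2*m) _ y hy.1 hy.2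
  have k1 := chain_close D c1 c2 m m le_rfl (by omega)
  have k2 := chain_close D c1 c2 m (m+1) (by omega) (by omega)
  simp only [← good_snd ε x hx m, ← good_snd ε y hy.1 m] at k2
  have hmem : ∀ v ∈ Good ε, (Ttilde ε)^[m] v ∈ (Set.Icc (-(1:ℝ)/2) (1/2) ×ˢ Set.Icc (-(1:ℝ)/2) (1/2)) := by
    intro v hv
    obtain ⟨h1, h2⟩ := hv m
    exact ⟨Set.Ico_subset_Icc_self (abs_mem_Ico _ h1), Set.Ico_subset_Icc_self (abs_mem_Ico _ h2)⟩
  have := hur _ (hmem x hx) _ (hmem y hy.1) (by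
    rw [Prod.dist_eq, max_lt_iff, Real.dist_eq, Real.dist_eq]
    exact ⟨lt_of_le_of_lt k1 hm, lt_of_le_of_lt k2 hm⟩)
  rw [Real.dist_eq] at this
  exact this.le

theorem stmt10 (ε : ℝ) (hε : ε < 0 ∨ 2 / Real.pi < ε) :
    ∀ A B : Set (ℝ × ℝ), A ⊆ unitSq → B ⊆ unitSq →
      MeasurableSet A → MeasurableSet B →
      Tendsto (fun n : ℕ => unifSq ((Ttilde ε)^[n] ⁻¹' A ∩ B)) atTop
        (nhds (unifSq A * unifSq B)) := by
  intro A B _ _ hA hB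
  obtain ⟨D⟩ := expPot_exists ε hε
  have := unifSq_prob
  have hS : 1 ≤ D.S := D.one_le_S
  refine qb_mixing unifSq (Ttilde ε) (Ttilde_mp ε) (kap ε) (kap_meas ε) (1 / D.S^4) (by positivity) ?_
    (stmt_happ ε D) A B hA hB
  intro m l a b
  obtain ⟨z, hz, _, _⟩ := chain_exists D m (extw a) 0 0 (by norm_num) (by norm_num)
  obtain ⟨w, hw, _, _⟩ := chain_exists D l (extw b) 0 0 (by norm_num) (by norm_num)
  refine le_trans ?_ (cyl_lower ε D m l a b z w hz hw)
  have hK1 := D.K_pos z m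
  have hK2 := D.K_pos w l
  have u1 := cyl_upper ε D m a z hz
  have u2 := cyl_upper ε D l b w hw
  calc _ ≤ ENNReal.ofReal (1 / D.S^4) * (ENNReal.ofReal (D.S / D.K z m) * ENNReal.ofReal (D.S / D.K w l)) := by
        gcongr
    _ = ENNReal.ofReal (1 / D.S^4 * (D.S / D.K z m * (D.S / D.K w l))) := by
        rw [ENNReal.ofReal_mul (by positivity), ENNReal.ofReal_mul (by positivity)]
    _ ≤ _ := by
        apply ENNReal.ofReal_le_ofReal
        apply le_of_eq
        field_simp
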